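/- Let Λ be a symmetric positive definite k×k matrix, l > 0, r, k ≥ 1, and let C = I_r ⊗ Λ (the rk×rk block-diagonal matrix with r diagonal blocks equal to Λ). Let h : ℝ^{rk} → ℝ be C^∞ with compact support. For each integer d ≥ 2 let Z_d ~ N(0, l²C/(d−1)). Then lim_{d→∞} sup_{x ∈ ℝ^{rk}} | k·d·E[ h(x + Z_d) − h(x) ] − (k·l²/2)·Tr( C·∇²h(x) ) | = 0, where ∇²h(x) is the Hessian matrix of h at x. -/

import Mathlib

open MeasureTheory ProbabilityTheory Filter
open scoped RealInnerProductSpace Kronecker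

lemma aux_moments {Ω : Type*} [MeasurableSpace Ω] (ν : Measure Ω) (f : Ω → ℝ)
    (hf : Measurable f) (v : ℝ) (hv : 0 ≤ v)
    (hm : Measure.map f ν = gaussianReal 0 (Real.toNNReal v)) :
    MemLp f 2 ν ∧ ∫ z, f z ∂ν = 0 ∧ ∫ z, f z ^ 2 ∂ν = v ∧
    Integrable (fun z => |f z| ^ 3) ν ∧
    ∫ z, |f z| ^ 3 ∂ν = (Real.sqrt v) ^ 3 * ∫ t, |t| ^ 3 ∂(gaussianReal 0 1) := by
  have hmem : ∀ p : ENNReal, p ≠ ⊤ → MemLp f p ν := by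
    intro p hp
    have := memLp_id_gaussianReal' (μ := 0) (v := Real.toNNReal v) p hp
    rw [← hm, memLp_map_measure_iff (by fun_prop) hf.aemeasurable] at this
    exact this
  refine ⟨hmem 2 (by simp), ?_, ?_, ?_, ?_⟩
  · have := integral_id_gaussianReal (μ := 0) (v := Real.toNNReal v)
    rwa [← hm, integral_map hf.aemeasurable (by fun_prop)] at this
  · have := variance_fun_id_gaussianReal (μ := 0) (v := Real.toNNReal v)
    rw [variance_eq_integral measurable_id'.aemeasurable] at this
    simp only [integral_id_gaussianReal, sub_zero] at this
    rw [← hm, integral_map hf.aemeasurable (by fun_prop)] at this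
    rw [this, Real.coe_toNNReal _ hv]
  · have := (hmem 3 (by simp)).integrable_norm_pow (by simp)
    simpa using this
  · have h1 : (gaussianReal 0 1).map (Real.sqrt v * ·) = gaussianReal 0 (Real.toNNReal v) := by
      rw [gaussianReal_map_const_mul]
      congr 1
      · simp
      · ext
        simp [Real.sq_sqrt hv, hv]
    have h2 : ∫ t, |t| ^ 3 ∂(Measure.map f ν) = ∫ z, |f z| ^ 3 ∂ν := by
      rw [integral_map hf.aemeasurable (by fun_prop)]
    rw [← h2, hm, ← h1, integral_map (by fun_prop) (by fun_prop), ← integral_const_mul]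
    congr 1
    ext t
    rw [abs_mul, mul_pow, abs_of_nonneg (Real.sqrt_nonneg v)]

lemma aux_taylor {E : Type*} [NormedAddCommGroup E] [NormedSpace ℝ E]
    (h : E → ℝ) (hs : ContDiff ℝ (⊤ : ℕ∞) h) (M : NNReal)
    (hM : LipschitzWith M (fderiv ℝ (fderiv ℝ h))) (x z : E) :
    |h (x + z) - h x - fderiv ℝ h x z - fderiv ℝ (fderiv ℝ h) x z z / 2| ≤ M * ‖z‖ ^ 3 := by
  have hd : Differentiable ℝ h := hs.differentiable (by simp)
  have hs1 : ContDiff ℝ (⊤ : ℕ∞) (fderiv ℝ h) := hs.fderiv_right (by simp)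
  have hd1 : Differentiable ℝ (fderiv ℝ h) := hs1.differentiable (by simp)
  have key : ∀ t ∈ Set.Icc (0 : ℝ) 1, ‖fderiv ℝ h (x + t • z) - fderiv ℝ h x
      - fderiv ℝ (fderiv ℝ h) x (t • z)‖ ≤ M * ‖z‖ ^ 2 := by
    intro t ht
    have htz : ‖t • z‖ ≤ ‖z‖ := by
      rw [norm_smul, Real.norm_eq_abs, abs_of_nonneg ht.1]
      exact mul_le_of_le_one_left (norm_nonneg _) ht.2
    have := (convex_closedBall x ‖z‖).norm_image_sub_le_of_norm_fderiv_le' (𝕜 := ℝ)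
      (f := fderiv ℝ h) (φ := fderiv ℝ (fderiv ℝ h) x) (C := M * ‖z‖) (x := x) (y := x + t • z)
      (fun y _ => hd1 y) (fun y hy => by
        rw [← dist_eq_norm]
        refine (hM.dist_le_mul y x).trans ?_
        gcongr
        exact hy) (by simp) (by simpa using htz)
    simp only [add_sub_cancel_left] at this
    refine this.trans ?_
    calc (M : ℝ) * ‖z‖ * ‖t • z‖ ≤ M * ‖z‖ * ‖z‖ := by gcongr
      _ = _ := by ring
  have := norm_image_sub_le_of_norm_deriv_le_segment_01' (C := M * ‖z‖ ^ 3)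
    (f := fun t : ℝ => h (x + t • z) - t * fderiv ℝ h x z
      - t ^ 2 / 2 * fderiv ℝ (fderiv ℝ h) x z z)
    (f' := fun t : ℝ => (fderiv ℝ h (x + t • z) - fderiv ℝ h x
      - fderiv ℝ (fderiv ℝ h) x (t • z)) z) (by
      intro t _
      apply HasDerivAt.hasDerivWithinAt
      have h1 : HasDerivAt (fun t : ℝ => x + t • z) z t := by
        simpa using ((hasDerivAt_id t).smul_const z).const_add x
      have h2 := (hd (x + t • z)).hasFDerivAt.comp_hasDerivAt t h1
      have h3 := (hasDerivAt_id t).mul_const (fderiv ℝ h x z)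
      have h4 := (((hasDerivAt_id t).pow 2).div_const 2).mul_const
        (fderiv ℝ (fderiv ℝ h) x z z)
      refine ((h2.sub h3).sub h4).congr_deriv ?_
      simp) (by
      intro t ht
      refine (ContinuousLinearMap.le_opNorm _ _).trans ?_
      calc _ ≤ (M * ‖z‖ ^ 2) * ‖z‖ := by
            gcongr
            exact key t ⟨ht.1, ht.2.le⟩
        _ = _ := by ring)
  simp only [Real.norm_eq_abs] at this
  refine le_trans (le_of_eq ?_) this
  congr 1
  simp
  ring

lemma aux_norm {ι : Type*} [Fintype ι] [Nonempty ι] (z : EuclideanSpace ℝ ι) :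
    ‖z‖ ^ 3 ≤ (Fintype.card ι : ℝ) ^ 2 * ∑ p, |z p| ^ 3 := by
  classical
  have h1 : ‖z‖ ≤ ∑ p, |z p| := by
    have : z = ∑ p, z p • EuclideanSpace.single p (1 : ℝ) := by
      ext q
      simp [Pi.single_apply]
    conv_lhs => rw [this]
    refine (norm_sum_le _ _).trans ?_
    simp [norm_smul]
  have h2 := pow_sum_div_card_le_sum_pow (s := Finset.univ) (f := fun p => |z p|)
    (fun _ _ => abs_nonneg _) 2
  rw [div_le_iff₀ (by simp [Fintype.card_pos]), Finset.card_univ] at h2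
  calc ‖z‖ ^ 3 ≤ (∑ p, |z p|) ^ 3 := by gcongr
    _ ≤ _ := by rw [mul_comm]; exact h2

lemma aux_core {ι : Type*} [Fintype ι] [DecidableEq ι] [Nonempty ι]
    (C : Matrix ι ι ℝ) (hC : C.PosSemidef) (s : ℝ) (hs0 : 0 ≤ s)
    (h : EuclideanSpace ℝ ι → ℝ) (hs : ContDiff ℝ (⊤ : ℕ∞) h) (hsupp : HasCompactSupport h)
    (M : NNReal) (hM : LipschitzWith M (fderiv ℝ (fderiv ℝ h)))
    (ν : Measure (EuclideanSpace ℝ ι)) [IsProbabilityMeasure ν]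
    (hν : ∀ u : EuclideanSpace ℝ ι, Measure.map (fun z => ⟪u, z⟫) ν
      = gaussianReal 0 (Real.toNNReal (s * (∑ p, ∑ q, u p * C p q * u q))))
    (x : EuclideanSpace ℝ ι) :
    |∫ z, (h (x + z) - h x) ∂ν - s / 2 * ∑ p, ∑ q, C p q *
      fderiv ℝ (fderiv ℝ h) x (EuclideanSpace.single p 1) (EuclideanSpace.single q 1)| ≤
    M * (Fintype.card ι : ℝ) ^ 2 * ∑ p, (Real.sqrt (s * C p p)) ^ 3
      * ∫ t, |t| ^ 3 ∂(gaussianReal 0 1) := by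
  have hQ : ∀ u : EuclideanSpace ℝ ι, 0 ≤ ∑ p, ∑ q, u p * C p q * u q := by
    intro u
    have := hC.dotProduct_mulVec_nonneg (fun p => u p)
    simpa [dotProduct, Matrix.mulVec, Finset.mul_sum, mul_assoc] using this
  have hsymm : ∀ p q, C p q = C q p := fun p q => by
    simpa using (hC.isHermitian.apply q p)
  have hmom := fun u => aux_moments ν (fun z => ⟪u, z⟫) (by fun_prop) _
    (mul_nonneg hs0 (hQ u)) (hν u)
  have hm1 : ∀ p, MemLp (fun z : EuclideanSpace ℝ ι => z p) 2 ν ∧ ∫ z, z p ∂ν = 0 ∧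
      ∫ z, z p ^ 2 ∂ν = s * C p p ∧ Integrable (fun z => |z p| ^ 3) ν ∧
      ∫ z, |z p| ^ 3 ∂ν = (Real.sqrt (s * C p p)) ^ 3 * ∫ t, |t| ^ 3 ∂(gaussianReal 0 1) := by
    intro p
    have := hmom (EuclideanSpace.single p 1)
    simpa [EuclideanSpace.inner_single_left, Pi.single_apply] using this
  have hint : ∀ p q, Integrable (fun z : EuclideanSpace ℝ ι => z p * z q) ν := fun p q =>
    (hm1 p).1.integrable_mul (hm1 q).1
  have hcov : ∀ p q, ∫ z, z p * z q ∂ν = s * C p q := by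
    intro p q
    have h1 := (hmom (EuclideanSpace.single p 1 + EuclideanSpace.single q 1)).2.2.1
    simp only [inner_add_left, EuclideanSpace.inner_single_left, map_one, one_mul] at h1
    have h2 : ∫ z : EuclideanSpace ℝ ι, (z p + z q) ^ 2 ∂ν
        = ∫ z, z p ^ 2 ∂ν + 2 * ∫ z, z p * z q ∂ν + ∫ z, z q ^ 2 ∂ν := by
      rw [← integral_const_mul, ← integral_add, ← integral_add]
      · congr 1; ext z; ring
      · exact ((hm1 p).1.integrable_sq).add ((hint p q).const_mul 2)
      · exact (hm1 q).1.integrable_sq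
      · exact (hm1 p).1.integrable_sq
      · exact (hint p q).const_mul 2
    rw [h2, (hm1 p).2.2.1, (hm1 q).2.2.1] at h1
    simp [Pi.single_apply, add_mul, mul_add, Finset.sum_add_distrib] at h1
    have := hsymm p q
    rw [← this] at h1
    linarith
  have hdec : ∀ z : EuclideanSpace ℝ ι, z = ∑ p, z p • EuclideanSpace.single p (1 : ℝ) := by
    intro z
    ext q
    simp [Pi.single_apply]
  set L := fderiv ℝ h x with hL
  set B := fderiv ℝ (fderiv ℝ h) x with hB
  have hLz : ∀ z, L z = ∑ p, z p * L (EuclideanSpace.single p 1) := by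
    intro z
    conv_lhs => rw [hdec z]
    simp
  have hBz : ∀ z, B z z = ∑ p, ∑ q, z p * z q *
      B (EuclideanSpace.single p 1) (EuclideanSpace.single q 1) := by
    intro z
    conv_lhs => rw [hdec z]
    simp only [map_sum, map_smul, _root_.sum_apply, _root_.smul_apply,
      smul_eq_mul, Finset.mul_sum]
    rw [Finset.sum_comm]
    refine Finset.sum_congr rfl fun p _ => Finset.sum_congr rfl fun q _ => ?_
    ring
  have hLi : Integrable (fun z => L z) ν := by
    rw [show (fun z => L z) = fun z => ∑ p, z p * L (EuclideanSpace.single p 1) from funext hLz]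
    exact integrable_finsetSum _ fun p _ => ((hm1 p).1.integrable (by simp)).mul_const _
  have hBi : Integrable (fun z => B z z) ν := by
    simp_rw [hBz]
    exact integrable_finsetSum _ fun p _ => integrable_finsetSum _ fun q _ =>
      (hint p q).mul_const _
  have hLint : ∫ z, L z ∂ν = 0 := by
    rw [integral_congr_ae (Eventually.of_forall hLz)]
    rw [integral_finsetSum _ fun p _ => ((hm1 p).1.integrable (by simp)).mul_const _]
    simp_rw [integral_mul_const, (hm1 _).2.1]
    simp
  have hBint : ∫ z, B z z ∂ν = s * ∑ p, ∑ q, C p q *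
      B (EuclideanSpace.single p 1) (EuclideanSpace.single q 1) := by
    simp_rw [hBz]
    rw [integral_finsetSum _ fun p _ => integrable_finsetSum _ fun q _ =>
      (hint p q).mul_const _]
    rw [Finset.mul_sum]
    refine Finset.sum_congr rfl fun p _ => ?_
    rw [integral_finsetSum _ fun q _ => (hint p q).mul_const _, Finset.mul_sum]
    refine Finset.sum_congr rfl fun q _ => ?_
    rw [integral_mul_const, hcov, mul_assoc]
  have hhi : Integrable (fun z => h (x + z) - h x) ν := by
    obtain ⟨K, hK⟩ := hsupp.exists_bound_of_continuous hs.continuous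
    refine Integrable.sub ?_ (integrable_const _)
    exact Integrable.of_bound
      ((hs.continuous.comp (continuous_const.add continuous_id)).aestronglyMeasurable) K
      (Eventually.of_forall fun z => hK _)
  have heq : ∫ z, (h (x + z) - h x) ∂ν - s / 2 * ∑ p, ∑ q, C p q *
      B (EuclideanSpace.single p 1) (EuclideanSpace.single q 1)
      = ∫ z, (h (x + z) - h x - L z - B z z / 2) ∂ν := by
    have hA : Integrable (fun z => h (x + z) - h x - L z) ν := hhi.sub hLi
    rw [integral_sub hA (hBi.div_const 2), integral_sub hhi hLi, integral_div,
      hLint, hBint]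
    ring
  rw [heq]
  have hn3 : ∀ z, |h (x + z) - h x - L z - B z z / 2| ≤
      M * ((Fintype.card ι : ℝ) ^ 2 * ∑ p, |z p| ^ 3) := fun z =>
    (aux_taylor h hs M hM x z).trans (by gcongr; exact aux_norm z)
  have hI : Integrable (fun z : EuclideanSpace ℝ ι =>
      M * ((Fintype.card ι : ℝ) ^ 2 * ∑ p, |z p| ^ 3)) ν :=
    ((integrable_finsetSum _ fun p _ => (hm1 p).2.2.2.1).const_mul _).const_mul _
  refine (abs_integral_le_integral_abs).trans ?_
  refine (integral_mono (((hhi.sub hLi).sub (hBi.div_const 2)).abs) hI hn3).trans ?_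
  rw [integral_const_mul, integral_const_mul, integral_finsetSum _ fun p _ => (hm1 p).2.2.2.1]
  simp_rw [(hm1 _).2.2.2.2]
  rw [mul_assoc]

lemma aux_lip {E F : Type*} [NormedAddCommGroup E] [NormedSpace ℝ E]
    [NormedAddCommGroup F] [NormedSpace ℝ F]
    (h : E → F) (hsupp : HasCompactSupport h) (hs : ContDiff ℝ (⊤ : ℕ∞) h) :
    ∃ M : NNReal, LipschitzWith M h :=
  ContDiff.lipschitzWith_of_hasCompactSupport (𝕂 := ℝ) hsupp hs (by simp)

lemma aux_bdd {E F : Type*} [NormedAddCommGroup E] [NormedSpace ℝ E]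
    [NormedAddCommGroup F] [NormedSpace ℝ F]
    (h : E → F) (hsupp : HasCompactSupport h) (hs : ContDiff ℝ (⊤ : ℕ∞) h) :
    ∃ K : ℝ, ∀ x, ‖h x‖ ≤ K :=
  hsupp.exists_bound_of_continuous hs.continuous

lemma aux_smooth {E F : Type*} [NormedAddCommGroup E] [NormedSpace ℝ E]
    [NormedAddCommGroup F] [NormedSpace ℝ F]
    (h : E → F) (hs : ContDiff ℝ (⊤ : ℕ∞) h) : ContDiff ℝ (⊤ : ℕ∞) (fderiv ℝ h) :=
  hs.fderiv_right (by simp)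

lemma aux_bounds {E : Type*} [NormedAddCommGroup E] [NormedSpace ℝ E]
    (h : E → ℝ) (hs : ContDiff ℝ (⊤ : ℕ∞) h) (hsupp : HasCompactSupport h) :
    (∃ M : NNReal, LipschitzWith M (fderiv ℝ (fderiv ℝ h))) ∧
    ∃ K : ℝ, ∀ x, ‖fderiv ℝ (fderiv ℝ h) x‖ ≤ K := by
  have hs2 : ContDiff ℝ (⊤ : ℕ∞) (fderiv ℝ (fderiv ℝ h)) := aux_smooth _ (aux_smooth _ hs)
  have hc2 : HasCompactSupport (fderiv ℝ (fderiv ℝ h)) := (hsupp.fderiv ℝ).fderiv ℝ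
  exact ⟨aux_lip (fderiv ℝ (fderiv ℝ h)) hc2 hs2, aux_bdd (fderiv ℝ (fderiv ℝ h)) hc2 hs2⟩

/-- For `C = I_r ⊗ Λ` with `Λ` symmetric positive definite, `l > 0`, and `h : ℝ^{rk} → ℝ`
smooth with compact support, if `Z_d ~ N(0, l²C/(d-1))` then
`sup_x | k d E[h(x+Z_d) - h(x)] - (k l²/2) Tr(C ∇²h(x)) | → 0` as `d → ∞`. -/
theorem generator_second_order_term_uniform_limit
    {r k : ℕ} (hr : 1 ≤ r) (hk : 1 ≤ k)
    (Λ : Matrix (Fin k) (Fin k) ℝ) (hsym : Λ.IsSymm) (hpd : Λ.PosDef)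
    (l : ℝ) (hl : 0 < l)
    (C : Matrix (Fin r × Fin k) (Fin r × Fin k) ℝ)
    (hC : C = (1 : Matrix (Fin r) (Fin r) ℝ) ⊗ₖ Λ)
    (h : EuclideanSpace ℝ (Fin r × Fin k) → ℝ)
    (hsmooth : ContDiff ℝ (⊤ : ℕ∞) h) (hsupp : HasCompactSupport h)
    (μ : ℕ → Measure (EuclideanSpace ℝ (Fin r × Fin k)))
    (hprob : ∀ d, IsProbabilityMeasure (μ d))
    (hμ : ∀ d : ℕ, 2 ≤ d → ∀ u : EuclideanSpace ℝ (Fin r × Fin k),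
      Measure.map (fun z => ⟪u, z⟫) (μ d)
        = gaussianReal 0
            (Real.toNNReal (l ^ 2 * (∑ p, ∑ q, u p * C p q * u q) / ((d : ℝ) - 1)))) :
    Tendsto (fun d : ℕ => ⨆ x : EuclideanSpace ℝ (Fin r × Fin k),
        |(k : ℝ) * d * (∫ z, (h (x + z) - h x) ∂(μ d))
          - k * l ^ 2 / 2 * ∑ p, ∑ q, C p q *
              fderiv ℝ (fun y => fderiv ℝ h y (EuclideanSpace.single q 1)) x
                (EuclideanSpace.single p 1)|)
      atTop (nhds 0) := by
  have : Nonempty (Fin r × Fin k) := ⟨(⟨0, hr⟩, ⟨0, hk⟩)⟩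
  have hCp : C.PosSemidef := by
    rw [hC]
    exact Matrix.PosSemidef.one.kronecker hpd.posSemidef
  have hs1 : ContDiff ℝ (⊤ : ℕ∞) (fderiv ℝ h) := hsmooth.fderiv_right (by simp)
  obtain ⟨⟨M, hM⟩, K, hK⟩ := aux_bounds h hsmooth hsupp
  set T : EuclideanSpace ℝ (Fin r × Fin k) → ℝ := fun x => ∑ p, ∑ q, C p q *
    fderiv ℝ (fderiv ℝ h) x (EuclideanSpace.single p 1) (EuclideanSpace.single q 1) with hT
  have hTeq : ∀ x, ∑ p, ∑ q, C p q *
      fderiv ℝ (fun y => fderiv ℝ h y (EuclideanSpace.single q 1)) x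
        (EuclideanSpace.single p 1) = T x := by
    intro x
    refine Finset.sum_congr rfl fun p _ => Finset.sum_congr rfl fun q _ => ?_
    rw [fderiv_clm_apply (hs1.differentiable (by simp) x) (by fun_prop)]
    simp
  set T0 : ℝ := ∑ p, ∑ q, |C p q| * K with hT0
  have hTb : ∀ x, |T x| ≤ T0 := by
    intro x
    refine (Finset.abs_sum_le_sum_abs _ _).trans (Finset.sum_le_sum fun p _ => ?_)
    refine (Finset.abs_sum_le_sum_abs _ _).trans (Finset.sum_le_sum fun q _ => ?_)
    rw [abs_mul]
    gcongr
    rw [← Real.norm_eq_abs]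
    refine (ContinuousLinearMap.le_opNorm₂ _ _ _).trans ?_
    simpa using hK x
  set A0 : ℝ := M * (Fintype.card (Fin r × Fin k) : ℝ) ^ 2 * ∑ p, (Real.sqrt (l ^ 2 * C p p)) ^ 3
      * ∫ t, |t| ^ 3 ∂(gaussianReal 0 1) with hA0
  have hw : Tendsto (fun d : ℕ => 1 / ((d : ℝ) - 1)) atTop (nhds 0) := by
    have h1 : Tendsto (fun d : ℕ => (d : ℝ) - 1) atTop atTop :=
      tendsto_atTop_add_const_right _ (-1) tendsto_natCast_atTop_atTop
    simp only [one_div]; exact h1.inv_tendsto_atTop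
  have hlim : Tendsto (fun d : ℕ => (k : ℝ) * ((1 + 1 / ((d : ℝ) - 1)) *
      Real.sqrt (1 / ((d : ℝ) - 1)) * A0) + k * l ^ 2 / 2 * (1 / ((d : ℝ) - 1) * T0))
      atTop (nhds 0) := by
    have h2 := (Real.continuous_sqrt.tendsto 0).comp hw
    have h3 := ((((hw.const_add 1).mul h2).mul_const A0).const_mul (k : ℝ)).add
      ((hw.mul_const T0).const_mul ((k : ℝ) * l ^ 2 / 2))
    simpa using h3
  refine squeeze_zero' (Eventually.of_forall fun d => Real.iSup_nonneg fun x => abs_nonneg _)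
    ?_ hlim
  filter_upwards [eventually_ge_atTop 2] with d hd
  have hd1 : (0 : ℝ) < (d : ℝ) - 1 := by
    have : (2 : ℝ) ≤ d := by exact_mod_cast hd
    linarith
  set w : ℝ := 1 / ((d : ℝ) - 1) with hwdef
  have hw0 : 0 < w := by positivity
  have hdw : (d : ℝ) * w = 1 + w := by
    rw [hwdef]
    field_simp
    ring
  apply ciSup_le
  intro x
  rw [hTeq]
  have := hprob d
  have hcore := aux_core C hCp (l ^ 2 * w) (by positivity) h hsmooth hsupp M hM (μ d)
    (fun u => by
      rw [hμ d hd u, hwdef]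
      congr 2
      ring) x
  have hA : M * (Fintype.card (Fin r × Fin k) : ℝ) ^ 2 *
      ∑ p, (Real.sqrt (l ^ 2 * w * C p p)) ^ 3 * ∫ t, |t| ^ 3 ∂(gaussianReal 0 1)
      = w * Real.sqrt w * A0 := by
    rw [hA0, Finset.mul_sum, Finset.mul_sum, Finset.mul_sum]
    refine Finset.sum_congr rfl fun p _ => ?_
    have e : Real.sqrt (l ^ 2 * w * C p p) = Real.sqrt w * Real.sqrt (l ^ 2 * C p p) := by
      rw [← Real.sqrt_mul hw0.le]
      congr 1
      ring
    have e2 : Real.sqrt w ^ 3 = w * Real.sqrt w := by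
      rw [pow_succ, Real.sq_sqrt hw0.le]
    rw [e, mul_pow, e2]
    ring
  rw [hA] at hcore
  set I := ∫ z, (h (x + z) - h x) ∂(μ d) with hI
  change |I - l ^ 2 * w / 2 * T x| ≤ _ at hcore
  have hid : (k : ℝ) * d * I - k * l ^ 2 / 2 * T x
      = k * d * (I - l ^ 2 * w / 2 * T x) + k * l ^ 2 / 2 * (w * T x) := by
    linear_combination (-(k : ℝ) * l ^ 2 / 2 * T x) * (-hdw)
  rw [hid]
  refine (abs_add_le _ _).trans ?_
  rw [abs_mul, abs_mul (_ / 2), abs_mul w, abs_of_nonneg (by positivity : (0 : ℝ) ≤ k * d),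
    abs_of_nonneg (by positivity : (0 : ℝ) ≤ k * l ^ 2 / 2), abs_of_pos hw0, ← hdw]
  refine add_le_add ?_ (by gcongr; exact hTb x)
  calc (k : ℝ) * d * |I - l ^ 2 * w / 2 * T x| ≤ k * d * (w * Real.sqrt w * A0) := by gcongr
    _ = _ := by ring
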